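/- Let (X, d, T) be a topological dynamical system. Then for every δ ∈ (0,1), the upper metric mean dimension satisfies mdim̄_M(X,d,T) = limsup_{ε→0} (1/log(1/ε)) · sup_{μ ∈ E_T(X)} h_μ^K(ε, δ). -/

import Mathlib

open Filter MeasureTheory Set Topology

variable {X : Type*}

/-- The dynamical (Bowen) metric `d_n(x,y) = max_{0 ≤ k ≤ n-1} d(T^k x, T^k y)`. -/
noncomputable def dynDist [MetricSpace X] (T : X → X) (n : ℕ) (x y : X) : ℝ :=
  ⨆ k ∈ Finset.range n, dist (T^[k] x) (T^[k] y)

/-- The open dynamical ball `B_n(x, ε) = {y : d_n(x,y) < ε}`. -/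
def dynBall [MetricSpace X] (T : X → X) (n : ℕ) (x : X) (ε : ℝ) : Set X :=
  {y | dynDist T n x y < ε}

/-- `s_n(K, ε)`: the maximal cardinality of an `(n,ε)`-separated subset of `K`. -/
noncomputable def sepNum [MetricSpace X] (T : X → X) (n : ℕ) (K : Set X) (ε : ℝ) : ℕ :=
  sSup {m | ∃ E : Finset X, ↑E ⊆ K ∧
    (∀ x ∈ E, ∀ y ∈ E, x ≠ y → ε < dynDist T n x y) ∧ E.card = m}

/-- `S(K, ε) = limsup_n (1/n) log s_n(K, ε)`. -/
noncomputable def sepEnt [MetricSpace X] (T : X → X) (K : Set X) (ε : ℝ) : EReal :=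
  limsup (fun n : ℕ => ((Real.log (sepNum T n K ε) / n : ℝ) : EReal)) atTop

/-- `r_n(K, ε)`: the minimal cardinality of an `(n,ε)`-spanning set for `K`. -/
noncomputable def spanNum [MetricSpace X] (T : X → X) (n : ℕ) (K : Set X) (ε : ℝ) : ℕ :=
  sInf {m | ∃ F : Finset X, (∀ x ∈ K, ∃ y ∈ F, dynDist T n x y ≤ ε) ∧ F.card = m}

/-- `R(K, ε) = limsup_n (1/n) log r_n(K, ε)`. -/
noncomputable def spanEnt [MetricSpace X] (T : X → X) (K : Set X) (ε : ℝ) : EReal :=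
  limsup (fun n : ℕ => ((Real.log (spanNum T n K ε) / n : ℝ) : EReal)) atTop

/-- Upper metric mean dimension. -/
noncomputable def mdimUpper [MetricSpace X] (T : X → X) : EReal :=
  limsup (fun ε : ℝ => sepEnt T univ ε / ((Real.log (1 / ε) : ℝ) : EReal)) (𝓝[>] (0:ℝ))

/-- Lower metric mean dimension. -/
noncomputable def mdimLower [MetricSpace X] (T : X → X) : EReal :=
  liminf (fun ε : ℝ => sepEnt T univ ε / ((Real.log (1 / ε) : ℝ) : EReal)) (𝓝[>] (0:ℝ))

/-- The ergodic `T`-invariant Borel probability measures. -/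
def ergodicMeasures [MeasurableSpace X] (T : X → X) : Set (Measure X) :=
  {μ | IsProbabilityMeasure μ ∧ Ergodic T μ}

/-- `U` is a finite open cover of `X`. -/
def IsFiniteOpenCover [TopologicalSpace X] (U : Finset (Set X)) : Prop :=
  (∀ V ∈ U, IsOpen V) ∧ ⋃₀ (U : Set (Set X)) = univ

/-- The cover `U^n = ⋁_{i=0}^{n-1} T^{-i} U`. -/
def dynRefine (T : X → X) (U : Finset (Set X)) (n : ℕ) : Set (Set X) :=
  {V | ∃ f : Fin n → Set X, (∀ i, f i ∈ U) ∧ V = ⋂ i : Fin n, T^[(i : ℕ)] ⁻¹' f i}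

/-- `N(C)`: the minimal cardinality of a subcover of `C`. -/
noncomputable def coverNum (C : Set (Set X)) : ℕ :=
  sInf {m | ∃ F : Finset (Set X), ↑F ⊆ C ∧ ⋃₀ (F : Set (Set X)) = univ ∧ F.card = m}

/-- `N_μ(U^n, δ)`: minimal number of members of `U^n` needed to cover a set of measure ≥ δ. -/
noncomputable def shapiraNum [MeasurableSpace X] (T : X → X) (μ : Measure X)
    (U : Finset (Set X)) (n : ℕ) (δ : ℝ) : ℕ :=
  sInf {m | ∃ F : Finset (Set X), ↑F ⊆ dynRefine T U n ∧
    ENNReal.ofReal δ ≤ μ (⋃₀ (F : Set (Set X))) ∧ F.card = m}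

/-- Shapira's entropy `h_μ^S(U, δ) = limsup_n (1/n) log N_μ(U^n, δ)`. -/
noncomputable def shapiraEnt [MeasurableSpace X] (T : X → X) (μ : Measure X)
    (U : Finset (Set X)) (δ : ℝ) : EReal :=
  limsup (fun n : ℕ => ((Real.log (shapiraNum T μ U n δ) / n : ℝ) : EReal)) atTop

/-- `N_μ^δ(n, ε)`: smallest number of open `(n,ε)`-dynamical balls whose union has
measure `> δ`. -/
noncomputable def katokNum [MetricSpace X] [MeasurableSpace X] (T : X → X) (μ : Measure X)
    (n : ℕ) (ε δ : ℝ) : ℕ :=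
  sInf {m | ∃ F : Finset X, ENNReal.ofReal δ < μ (⋃ x ∈ F, dynBall T n x ε) ∧ F.card = m}

/-- Katok's entropy `h_μ^K(ε, δ) = limsup_n (1/n) log N_μ^δ(n, ε)`. -/
noncomputable def katokEnt [MetricSpace X] [MeasurableSpace X] (T : X → X) (μ : Measure X)
    (ε δ : ℝ) : EReal :=
  limsup (fun n : ℕ => ((Real.log (katokNum T μ n ε δ) / n : ℝ) : EReal)) atTop

/-- Lower Katok entropy `h̲_μ^K(ε, δ) = liminf_n (1/n) log N_μ^δ(n, ε)`. -/
noncomputable def katokEntLower [MetricSpace X] [MeasurableSpace X] (T : X → X) (μ : Measure X)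
    (ε δ : ℝ) : EReal :=
  liminf (fun n : ℕ => ((Real.log (katokNum T μ n ε δ) / n : ℝ) : EReal)) atTop

/-- `Ñ_μ^δ(n, ε)`: smallest number of sets of `d_n`-diameter ≤ ε whose union has
measure `> δ`. -/
noncomputable def katokNumTilde [MetricSpace X] [MeasurableSpace X] (T : X → X) (μ : Measure X)
    (n : ℕ) (ε δ : ℝ) : ℕ :=
  sInf {m | ∃ F : Finset (Set X), (∀ A ∈ F, ∀ x ∈ A, ∀ y ∈ A, dynDist T n x y ≤ ε) ∧
    ENNReal.ofReal δ < μ (⋃₀ (F : Set (Set X))) ∧ F.card = m}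

/-- Brin–Katok local entropy `h_μ^{BK}(x, ε) = limsup_n -(1/n) log μ(B_n(x, ε))`. -/
noncomputable def brinKatok [MetricSpace X] [MeasurableSpace X] (T : X → X) (μ : Measure X)
    (x : X) (ε : ℝ) : EReal :=
  limsup (fun n : ℕ => -(ENNReal.log (μ (dynBall T n x ε))) / (n : EReal)) atTop

/-- Lower Brin–Katok local entropy `h̲_μ^{BK}(x, ε) = liminf_n -(1/n) log μ(B_n(x, ε))`. -/
noncomputable def brinKatokLower [MetricSpace X] [MeasurableSpace X] (T : X → X) (μ : Measure X)
    (x : X) (ε : ℝ) : EReal :=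
  liminf (fun n : ℕ => -(ENNReal.log (μ (dynBall T n x ε))) / (n : EReal)) atTop

/-- Local entropy function `h_d(x, ε) = inf { S(K, ε) : K closed neighborhood of x }`. -/
noncomputable def locEnt [MetricSpace X] (T : X → X) (x : X) (ε : ℝ) : EReal :=
  ⨅ K ∈ {K : Set X | IsClosed K ∧ K ∈ 𝓝 x}, sepEnt T K ε

/-- Local spanning entropy `h̃_d(x, ε) = inf { R(K, ε) : K closed neighborhood of x }`. -/
noncomputable def locSpanEnt [MetricSpace X] (T : X → X) (x : X) (ε : ℝ) : EReal :=
  ⨅ K ∈ {K : Set X | IsClosed K ∧ K ∈ 𝓝 x}, spanEnt T K ε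

/-- `U_x^n`: the union of all cells of `U^n` containing `x`. -/
def dynCoverCell (T : X → X) (U : Finset (Set X)) (n : ℕ) (x : X) : Set X :=
  ⋃₀ {V | V ∈ dynRefine T U n ∧ x ∈ V}

/-!
The Katok entropy at scale `ε` is at most the entropy of separated sets at scale `ε / 2`, so one
inequality is a change of scale. Conversely, an ergodic measure `μ` of Katok entropy less than `s`
at scale `ε` has, for infinitely many `n`, mass more than `δ` on a union of at most `exp (s * n)`
Bowen balls of length `n`. By ergodicity, almost every orbit spends most of its time in blocks
along which it follows such balls after a bounded delay, and points whose orbits decompose into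
such blocks, up to rare exceptional times, are again exponentially covered at an arbitrarily small
cost in the exponent. This yields coverings of almost full measure for `μ` and for all invariant
measures near `μ`. As the space of probability measures is second countable, countably many
coverings serve all ergodic measures, and a diagonal union makes them one. If some orbits kept
leaving this covering with positive frequency, a limit of empirical measures, and hence an ergodic
measure, would charge its complement. So all of `X` is exponentially covered with exponent `s` at
scale `2 * ε`, and `log (1 / ε)` does not see the factor two.
-/

section Covering

variable [PseudoMetricSpace X] {T : X → X} {ρ : ℝ} {n : ℕ} {A B : Set X} {m m' : ℝ}

/-- `A` is covered by at most `m` sets of `d_n`-diameter at most `ρ`. The bound `m` is real so that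
it can be an exponential. -/
def DynCovered (T : X → X) (ρ : ℝ) (n : ℕ) (A : Set X) (m : ℝ) : Prop :=
  ∃ 𝒜 : Finset (Set X), A ⊆ ⋃₀ (𝒜 : Set (Set X)) ∧
    (∀ S ∈ 𝒜, ∀ x ∈ S, ∀ y ∈ S, ∀ k < n, dist (T^[k] x) (T^[k] y) ≤ ρ) ∧ (𝒜.card : ℝ) ≤ m

namespace DynCovered

lemma mono (h : DynCovered T ρ n A m) (hBA : B ⊆ A) (hm : m ≤ m') : DynCovered T ρ n B m' := by
  obtain ⟨𝒜, hA, hdiam, hcard⟩ := h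
  exact ⟨𝒜, hBA.trans hA, hdiam, hcard.trans hm⟩

lemma antitone_time {n' : ℕ} (h : DynCovered T ρ n A m) (hn : n' ≤ n) : DynCovered T ρ n' A m := by
  obtain ⟨𝒜, hA, hdiam, hcard⟩ := h
  exact ⟨𝒜, hA, fun S hS x hx y hy k hk => hdiam S hS x hx y hy k (hk.trans_le hn), hcard⟩

lemma empty : DynCovered T ρ n ∅ 0 :=
  ⟨∅, by simp, by simp, by simp⟩

lemma zero_time : DynCovered T ρ 0 A 1 :=
  ⟨{univ}, by simp, by simp, by simp⟩

lemma of_forall_dist_le {c : X} {r : ℝ}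
    (h : ∀ x ∈ A, ∀ k < n, dist (T^[k] c) (T^[k] x) ≤ r) : DynCovered T (2 * r) n A 1 := by
  refine ⟨{A}, by simp, ?_, by simp⟩
  simp only [Finset.mem_singleton, forall_eq]
  intro x hx y hy k hk
  linarith [dist_triangle_left (T^[k] x) (T^[k] y) (T^[k] c), h x hx k hk, h y hy k hk]

lemma union (hA : DynCovered T ρ n A m) (hB : DynCovered T ρ n B m') :
    DynCovered T ρ n (A ∪ B) (m + m') := by
  classical
  obtain ⟨𝒜, hA, hdiamA, hcardA⟩ := hA
  obtain ⟨ℬ, hB, hdiamB, hcardB⟩ := hB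
  refine ⟨𝒜 ∪ ℬ, ?_, fun S hS => ?_, ?_⟩
  · rw [Finset.coe_union, sUnion_union]
    exact union_subset_union hA hB
  · exact (Finset.mem_union.1 hS).elim (hdiamA S) (hdiamB S)
  · calc ((𝒜 ∪ ℬ).card : ℝ) ≤ 𝒜.card + ℬ.card := mod_cast Finset.card_union_le 𝒜 ℬ
      _ ≤ m + m' := add_le_add hcardA hcardB

lemma biUnion {ι : Type*} {s : Finset ι} {A : ι → Set X} {m : ι → ℝ}
    (h : ∀ i ∈ s, DynCovered T ρ n (A i) (m i)) :
    DynCovered T ρ n (⋃ i ∈ s, A i) (∑ i ∈ s, m i) := by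
  classical
  induction s using Finset.induction_on with
  | empty => simpa using DynCovered.empty
  | insert a s ha ih =>
    rw [Finset.sum_insert ha, Finset.set_biUnion_insert]
    exact (h a (Finset.mem_insert_self _ _)).union
      (ih fun i hi => h i (Finset.mem_insert_of_mem hi))

lemma inter_preimage {n' : ℕ} (hA : DynCovered T ρ n A m) (hB : DynCovered T ρ n' B m') :
    DynCovered T ρ (n + n') (A ∩ T^[n] ⁻¹' B) (m * m') := by
  classical
  obtain ⟨𝒜, hA, hdiamA, hcardA⟩ := hA
  obtain ⟨ℬ, hB, hdiamB, hcardB⟩ := hB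
  refine ⟨Finset.image₂ (fun S S' => S ∩ T^[n] ⁻¹' S') 𝒜 ℬ, ?_, ?_, ?_⟩
  · rintro x ⟨hxA, hxB⟩
    obtain ⟨S, hS, hxS⟩ := hA hxA
    obtain ⟨S', hS', hxS'⟩ := hB hxB
    exact ⟨S ∩ T^[n] ⁻¹' S', Finset.mem_image₂_of_mem hS hS', hxS, hxS'⟩
  · simp only [Finset.forall_mem_image₂]
    intro S hS S' hS' x hx y hy k hk
    rcases lt_or_ge k n with hkn | hkn
    · exact hdiamA S hS x hx.1 y hy.1 k hkn
    · have := hdiamB S' hS' _ hx.2 _ hy.2 (k - n) (by omega)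
      rwa [← Function.iterate_add_apply, ← Function.iterate_add_apply,
        Nat.sub_add_cancel hkn] at this
  · calc ((Finset.image₂ (fun S S' => S ∩ T^[n] ⁻¹' S') 𝒜 ℬ).card : ℝ)
        ≤ 𝒜.card * ℬ.card := mod_cast Finset.card_image₂_le _ 𝒜 ℬ
      _ ≤ m * m' := mul_le_mul hcardA hcardB (Nat.cast_nonneg _) ((Nat.cast_nonneg _).trans hcardA)

lemma univ_pow (h : DynCovered T ρ 1 univ m) (n : ℕ) : DynCovered T ρ n univ (m ^ n) := by
  induction n with
  | zero => simpa using DynCovered.zero_time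
  | succ n ih => simpa [pow_succ] using ih.inter_preimage h

end DynCovered

lemma exists_dynCovered_one_univ [CompactSpace X] (T : X → X) (hρ : 0 < ρ) :
    ∃ C : ℝ, 1 ≤ C ∧ DynCovered T ρ 1 univ C := by
  obtain ⟨c, -, hc, hcover⟩ :=
    finite_cover_balls_of_compact (isCompact_univ (X := X)) (half_pos hρ)
  have hballs : ∀ x ∈ hc.toFinset, DynCovered T ρ 1 (Metric.ball x (ρ / 2)) 1 := fun x _ => by
    rw [show ρ = 2 * (ρ / 2) by ring]
    refine DynCovered.of_forall_dist_le (c := x) fun y hy k hk => ?_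
    obtain rfl := Nat.lt_one_iff.1 hk
    simpa using (Metric.mem_ball'.1 hy).le
  refine ⟨max 1 (∑ _x ∈ hc.toFinset, 1), le_max_left _ _,
    (DynCovered.biUnion hballs).mono ?_ (le_max_right _ _)⟩
  simpa using hcover

end Covering

section ExponentialCovering

variable [PseudoMetricSpace X] {T : X → X} {ρ s t : ℝ} {V : ℕ → Set X}

/-- For all large `n` the set `V n` is covered by at most `exp (s * n)` sets of `d_n`-diameter at
most `ρ`: the sequence `V` has exponential growth rate at most `s` at scale `ρ`. -/
def ExpCovered (T : X → X) (ρ s : ℝ) (V : ℕ → Set X) : Prop :=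
  ∀ᶠ n : ℕ in atTop, DynCovered T ρ n (V n) (Real.exp (s * n))

lemma eventually_mul_exp_le_exp (hst : s < t) (D : ℝ) :
    ∀ᶠ n : ℕ in atTop, D * (n + 1) * Real.exp (s * n) ≤ Real.exp (t * n) := by
  have hlim : Tendsto (fun x : ℝ => D * ((x + 1) * Real.exp (-(t - s) * x))) atTop (𝓝 0) := by
    have hx := tendsto_rpow_mul_exp_neg_mul_atTop_nhds_zero 1 (t - s) (sub_pos.2 hst)
    have h1 := tendsto_rpow_mul_exp_neg_mul_atTop_nhds_zero 0 (t - s) (sub_pos.2 hst)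
    simpa [add_mul] using (hx.add h1).const_mul D
  filter_upwards [(hlim.comp tendsto_natCast_atTop_atTop).eventually_le_const one_pos] with n hn
  calc D * (n + 1) * Real.exp (s * n)
      = D * ((n + 1) * Real.exp (-(t - s) * n)) * Real.exp (t * n) := by
        rw [mul_assoc, mul_assoc D, mul_assoc (n + 1 : ℝ), ← Real.exp_add]; ring_nf
    _ ≤ 1 * Real.exp (t * n) := by gcongr; exact hn
    _ = Real.exp (t * n) := one_mul _

namespace ExpCovered

lemma of_eventually_linear {D : ℝ} (hst : s < t)
    (h : ∀ᶠ n : ℕ in atTop, DynCovered T ρ n (V n) (D * (n + 1) * Real.exp (s * n))) :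
    ExpCovered T ρ t V := by
  filter_upwards [h, eventually_mul_exp_le_exp hst D] with n hn hle
  exact hn.mono subset_rfl hle

lemma iUnion_preimage [CompactSpace X] (hρ : 0 < ρ) (hst : s < t) (h : ExpCovered T ρ s V)
    (J : ℕ) : ExpCovered T ρ t fun n => ⋃ j ∈ Finset.range J, T^[j] ⁻¹' V n := by
  obtain ⟨C, hC1, hC⟩ := exists_dynCovered_one_univ T hρ
  refine of_eventually_linear (D := ∑ j ∈ Finset.range J, C ^ j) hst ?_
  filter_upwards [h] with n hn
  have hdelay : ∀ j ∈ Finset.range J,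
      DynCovered T ρ n (T^[j] ⁻¹' V n) (C ^ j * Real.exp (s * n)) := fun j _ => by
    simpa using ((hC.univ_pow j).inter_preimage hn).antitone_time (Nat.le_add_left n j)
  refine (DynCovered.biUnion hdelay).mono subset_rfl ?_
  have hpow : ∀ j ∈ Finset.range J, 0 ≤ C ^ j := fun j _ => by positivity
  rw [← Finset.sum_mul]
  gcongr
  exact le_mul_of_one_le_right (Finset.sum_nonneg hpow) (by simp)

/-- The union is taken diagonally: `W n` collects those `V i n` with `i ≤ n` whose covering number
already obeys the bound at time `n`. -/
lemma exists_diagonal {V : ℕ → ℕ → Set X} (hst : s < t) (hopen : ∀ i n, IsOpen (V i n))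
    (h : ∀ i, ExpCovered T ρ s (V i)) :
    ∃ W : ℕ → Set X, (∀ n, IsOpen (W n)) ∧ ExpCovered T ρ t W ∧
      ∀ i, ∀ᶠ n in atTop, V i n ⊆ W n := by
  classical
  let good (n : ℕ) : Finset ℕ := (Finset.range (n + 1)).filter fun i =>
    DynCovered T ρ n (V i n) (Real.exp (s * n))
  refine ⟨fun n => ⋃ i ∈ good n, V i n, fun n => isOpen_biUnion fun i _ => hopen i n,
    of_eventually_linear (D := 1) hst (Eventually.of_forall fun n => ?_), fun i => ?_⟩
  · refine (DynCovered.biUnion fun i hi => (Finset.mem_filter.1 hi).2).mono subset_rfl ?_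
    rw [Finset.sum_const, nsmul_eq_mul, one_mul]
    gcongr
    exact_mod_cast (Finset.card_filter_le _ _).trans (Finset.card_range _).le
  · filter_upwards [h i, eventually_ge_atTop i] with n hn hin
    exact subset_biUnion_of_mem (u := fun i => V i n)
      (Finset.mem_filter.2 ⟨Finset.mem_range_succ_iff.2 hin, hn⟩)

end ExpCovered

end ExponentialCovering

section Visits

variable {T : X → X} {B : Set X}

/-- The number of times `k < n` at which the orbit of `x` is in `B`. -/
noncomputable def visits (T : X → X) (B : Set X) (n : ℕ) (x : X) : ℕ :=
  birkhoffSum T (B.indicator 1) n x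

/-- The points whose orbit is in `B` for a proportion at most `η` of the times `k < n`. -/
def rareVisits (T : X → X) (B : Set X) (η : ℝ) (n : ℕ) : Set X :=
  {x | (visits T B n x : ℝ) ≤ η * n}

lemma mem_rareVisits {η : ℝ} {n : ℕ} {x : X} :
    x ∈ rareVisits T B η n ↔ (visits T B n x : ℝ) ≤ η * n :=
  Iff.rfl

lemma visits_eq_sum (n : ℕ) (x : X) :
    visits T B n x = ∑ k ∈ Finset.range n, B.indicator (fun _ => 1) (T^[k] x) :=
  rfl

lemma natCast_visits {R : Type*} [Semiring R] (n : ℕ) (x : X) :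
    (visits T B n x : R) = ∑ k ∈ Finset.range n, B.indicator (fun _ => 1) (T^[k] x) := by
  rw [visits_eq_sum, Nat.cast_sum]
  exact Finset.sum_congr rfl fun k _ => by by_cases h : T^[k] x ∈ B <;> simp [h]

lemma visits_add (m n : ℕ) (x : X) :
    visits T B (m + n) x = visits T B m x + visits T B n (T^[m] x) :=
  birkhoffSum_add T _ m n x

lemma visits_succ_of_mem {x : X} (hx : x ∈ B) (n : ℕ) :
    visits T B (n + 1) x = visits T B n (T x) + 1 := by
  rw [add_comm n 1, visits_add, add_comm]
  simp [visits, hx]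

lemma visits_le (n : ℕ) (x : X) : visits T B n x ≤ n := by
  rw [visits_eq_sum]
  calc ∑ k ∈ Finset.range n, B.indicator (fun _ => 1) (T^[k] x) ≤ ∑ _k ∈ Finset.range n, 1 :=
        Finset.sum_le_sum fun _ _ => indicator_le_self' (fun _ _ => zero_le) _
    _ = n := by simp

lemma visits_mono_set {B' : Set X} (h : B ⊆ B') (n : ℕ) (x : X) :
    visits T B n x ≤ visits T B' n x := by
  simp only [visits_eq_sum]
  exact Finset.sum_le_sum fun _ _ => indicator_le_indicator_of_subset h (fun _ => zero_le) _

lemma upperSemicontinuous_visits [TopologicalSpace X] (hT : Continuous T) (hB : IsClosed B)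
    (n : ℕ) : UpperSemicontinuous (visits T B n) := by
  change UpperSemicontinuous fun x => ∑ k ∈ Finset.range n, B.indicator (fun _ => 1) (T^[k] x)
  exact upperSemicontinuous_sum fun k _ =>
    (hB.upperSemicontinuous_indicator zero_le).comp (hT.iterate k)

lemma isOpen_rareVisits [TopologicalSpace X] (hT : Continuous T) (hB : IsClosed B) (η : ℝ)
    (n : ℕ) : IsOpen (rareVisits T B η n) := by
  refine isOpen_iff_mem_nhds.2 fun x hx => ?_
  filter_upwards [upperSemicontinuous_visits hT hB n x _ (Nat.lt_succ_self _)] with y hy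
  exact (Nat.cast_le.2 (Nat.le_of_lt_succ hy)).trans (mem_rareVisits.1 hx)

/-- Cut the times `k < n` into blocks of length `L`; the incomplete block costs at most `L`. -/
lemma visits_le_of_forall_visits_le {η : ℝ} {L : ℕ} (hL : L ≠ 0)
    (h : ∀ x, (visits T B L x : ℝ) ≤ η * L) (n : ℕ) (x : X) :
    (visits T B n x : ℝ) ≤ η * n + L := by
  have hη : 0 ≤ η := nonneg_of_mul_nonneg_left ((Nat.cast_nonneg _).trans (h x)) (by positivity)
  induction n using Nat.strong_induction_on generalizing x with
  | _ n ih =>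
  rcases lt_or_ge n L with hn | hn
  · have : (visits T B n x : ℝ) ≤ L := mod_cast (visits_le n x).trans hn.le
    nlinarith
  · obtain ⟨m, rfl⟩ := Nat.exists_eq_add_of_le hn
    rw [visits_add]
    push_cast
    linarith [h x, ih m (by omega) (T^[L] x)]

lemma eventually_rareVisits_eq_univ {η η' : ℝ} {L : ℕ} (hη : η < η') (hL : L ≠ 0)
    (h : ∀ x, (visits T B L x : ℝ) ≤ η * L) : ∀ᶠ n in atTop, rareVisits T B η' n = univ := by
  have hlarge := tendsto_natCast_atTop_atTop.eventually_ge_atTop ((L : ℝ) / (η' - η))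
  filter_upwards [hlarge] with n hn
  refine eq_univ_of_forall fun x => (visits_le_of_forall_visits_le hL h n x).trans ?_
  linarith [(div_le_iff₀ (sub_pos.2 hη)).1 hn]

end Visits

section RareExits

lemma exists_forall_sum_exp_le {r c : ℝ} (hr : r < 0) (hc : 0 < c) :
    ∃ M₀ : ℕ, ∀ M ≥ M₀, ∀ K : ℕ, ∑ N ∈ Finset.Icc M K, Real.exp (r * N) ≤ c := by
  have hsummable : Summable fun N : ℕ => Real.exp (r * N) := by
    simpa only [mul_comm] using Real.summable_exp_nat_mul_iff.2 hr
  obtain ⟨S, hS⟩ := summable_iff_vanishing.1 hsummable _ (Iio_mem_nhds hc)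
  refine ⟨S.sup id + 1, fun M hM K => (hS _ (Finset.disjoint_left.2 fun N hN hNS => ?_)).le⟩
  have : N ≤ S.sup id := Finset.le_sup (f := id) hNS
  have := (Finset.mem_Icc.1 hN).1
  omega

variable {T : X → X} {ρ s t C : ℝ} {V : ℕ → Set X} {M K : ℕ}

lemma pow_floor_le_exp {a b : ℝ} (ha : 1 < a) (hb : 0 ≤ b) (n : ℕ) :
    a ^ ⌊b / Real.log a * n⌋₊ ≤ Real.exp (b * n) := by
  have hlog : 0 < Real.log a := Real.log_pos ha
  have hfloor : (⌊b / Real.log a * n⌋₊ : ℝ) ≤ b / Real.log a * n := Nat.floor_le (by positivity)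
  calc a ^ ⌊b / Real.log a * n⌋₊ = Real.exp (⌊b / Real.log a * n⌋₊ * Real.log a) := by
        rw [Real.exp_nat_mul, Real.exp_log (by linarith)]
    _ ≤ Real.exp (b / Real.log a * n * Real.log a) := by gcongr
    _ = Real.exp (b * n) := by field_simp

/-- An orbit segment either starts with a block, during which it is in some `V N`, or spends its
first step outside all the `V N`. -/
lemma setOf_visits_lt_subset {n f : ℕ} (hKn : K ≤ n) :
    {x | visits T (⋃ N ∈ Finset.Icc M K, V N)ᶜ (n + 1) x < f + 1} ⊆
      (⋃ N ∈ Finset.Icc M K,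
        V N ∩ T^[N] ⁻¹' {x | visits T (⋃ N ∈ Finset.Icc M K, V N)ᶜ (n + 1 - N) x < f + 1}) ∪
      univ ∩ T^[1] ⁻¹' {x | visits T (⋃ N ∈ Finset.Icc M K, V N)ᶜ n x < f} := by
  intro x hx
  rw [mem_ofPred_eq] at hx
  by_cases hxO : x ∈ ⋃ N ∈ Finset.Icc M K, V N
  · left
    simp only [mem_iUnion] at hxO ⊢
    obtain ⟨N, hN, hxN⟩ := hxO
    have hNn : N ≤ n + 1 := (Finset.mem_Icc.1 hN).2.trans (hKn.trans n.le_succ)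
    refine ⟨N, hN, hxN, lt_of_le_of_lt ?_ hx⟩
    conv_rhs => rw [← Nat.add_sub_cancel' hNn, visits_add]
    exact Nat.le_add_left _ _
  · right
    rw [visits_succ_of_mem hxO] at hx
    exact ⟨mem_univ x, Nat.lt_of_succ_lt_succ hx⟩

variable [PseudoMetricSpace X]

lemma DynCovered.setOf_visits_lt (hC : 1 ≤ C) (hCcov : DynCovered T ρ 1 univ C) (ht : 0 ≤ t)
    (hM : 1 ≤ M)
    (hV : ∀ N ∈ Finset.Icc M K, DynCovered T ρ N (V N) (Real.exp (s * N)))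
    (hsum : ∑ N ∈ Finset.Icc M K, Real.exp ((s - t) * N) ≤ 1 / 2) (n f : ℕ) :
    DynCovered T ρ n {x | visits T (⋃ N ∈ Finset.Icc M K, V N)ᶜ n x < f}
      ((2 * C) ^ (f + K) * Real.exp (t * n)) := by
  induction n using Nat.strong_induction_on generalizing f with
  | _ n ih =>
  rcases lt_or_ge K n with hKn | hnK
  · obtain ⟨n, rfl⟩ := Nat.exists_eq_succ_of_ne_zero (Nat.ne_zero_of_lt hKn)
    cases f with
    | zero => exact DynCovered.empty.mono (by simp) (by positivity)
    | succ f =>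
    have hblock : ∀ N ∈ Finset.Icc M K, DynCovered T ρ (n + 1)
        (V N ∩ T^[N] ⁻¹' {x | visits T (⋃ N ∈ Finset.Icc M K, V N)ᶜ (n + 1 - N) x < f + 1})
        (Real.exp ((s - t) * N) * ((2 * C) ^ (f + 1 + K) * Real.exp (t * (n + 1 : ℕ)))) := by
      intro N hN
      have hNmem := Finset.mem_Icc.1 hN
      have hcov := (hV N hN).inter_preimage (ih (n + 1 - N) (by omega) (f + 1))
      rw [Nat.add_sub_cancel' (by omega)] at hcov
      refine hcov.mono subset_rfl (le_of_eq ?_)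
      rw [mul_left_comm, mul_left_comm (Real.exp ((s - t) * N)), ← Real.exp_add, ← Real.exp_add,
        Nat.cast_sub (by omega)]
      ring_nf
    have hfree := hCcov.inter_preimage (ih n (Nat.lt_succ_self n) f)
    rw [add_comm 1 n] at hfree
    refine ((DynCovered.biUnion hblock).union hfree).mono
      (setOf_visits_lt_subset (Nat.le_of_lt_succ hKn)) ?_
    have hexp : Real.exp (t * n) ≤ Real.exp (t * (n + 1 : ℕ)) := by gcongr; simp
    calc _ ≤ 1 / 2 * ((2 * C) ^ (f + 1 + K) * Real.exp (t * (n + 1 : ℕ)))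
          + C * ((2 * C) ^ (f + K) * Real.exp (t * (n + 1 : ℕ))) := by
          rw [← Finset.sum_mul]; gcongr
      _ = (2 * C) ^ (f + 1 + K) * Real.exp (t * (n + 1 : ℕ)) := by ring
  · refine (hCcov.univ_pow n).mono (subset_univ _) ?_
    calc C ^ n ≤ (2 * C) ^ n := by gcongr; linarith
      _ ≤ (2 * C) ^ (f + K) := by gcongr <;> [linarith; omega]
      _ ≤ (2 * C) ^ (f + K) * Real.exp (t * n) :=
          le_mul_of_one_le_right (by positivity) (Real.one_le_exp (by positivity))

/-- Each step outside the blocks costs a factor `2 * C`, so `η` is chosen to make the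
`(2 * C) ^ (η * n)` choices of free steps grow more slowly than the gap between the rates. -/
lemma exists_pos_expCovered_rareVisits [CompactSpace X] (T : X → X) (hρ : 0 < ρ) (hs : 0 ≤ s)
    (hst : s < t) :
    ∃ η > 0, ∀ V : ℕ → Set X, ExpCovered T ρ s V → ∀ᶠ M in atTop, ∀ K,
      ExpCovered T ρ t (rareVisits T (⋃ N ∈ Finset.Icc M K, V N)ᶜ η) := by
  obtain ⟨C, hC, hCcov⟩ := exists_dynCovered_one_univ T hρ
  obtain ⟨u, hsu, hut⟩ := exists_between hst
  obtain ⟨v, huv, hvt⟩ := exists_between hut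
  have hlog : 0 < Real.log (2 * C) := Real.log_pos (by linarith)
  refine ⟨(v - u) / Real.log (2 * C), div_pos (sub_pos.2 huv) hlog, fun V hV => ?_⟩
  obtain ⟨M₀, hM₀⟩ := exists_forall_sum_exp_le (sub_neg.2 hsu) one_half_pos
  obtain ⟨M₁, hM₁⟩ := eventually_atTop.1 hV
  filter_upwards [eventually_ge_atTop (max 1 (max M₀ M₁))] with M hM K
  simp only [max_le_iff] at hM
  refine ExpCovered.of_eventually_linear (D := (2 * C) ^ (1 + K)) hvt
    (Eventually.of_forall fun n => ?_)
  refine (DynCovered.setOf_visits_lt (V := V) hC hCcov (hs.trans hsu.le) hM.1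
    (fun N hN => hM₁ N (hM.2.2.trans (Finset.mem_Icc.1 hN).1)) (hM₀ M hM.2.1 K) n
    (⌊(v - u) / Real.log (2 * C) * n⌋₊ + 1)).mono
    (fun x hx => Nat.lt_succ_of_le (Nat.le_floor (mem_rareVisits.1 hx))) ?_
  have hfree := pow_floor_le_exp (a := 2 * C) (by linarith) (sub_pos.2 huv).le n
  calc _ = (2 * C) ^ (1 + K) * (2 * C) ^ ⌊(v - u) / Real.log (2 * C) * n⌋₊ * Real.exp (u * n) := by
        ring
    _ ≤ (2 * C) ^ (1 + K) * Real.exp ((v - u) * n) * Real.exp (u * n) := by gcongr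
    _ = (2 * C) ^ (1 + K) * Real.exp (v * n) := by
        rw [mul_assoc, ← Real.exp_add]; ring_nf
    _ ≤ (2 * C) ^ (1 + K) * (n + 1) * Real.exp (v * n) := by
        gcongr; exact le_mul_of_one_le_right (by positivity) (by simp)

end RareExits

section BowenMetric

variable [MetricSpace X] {T : X → X} {n : ℕ} {x y : X} {r : ℝ}

lemma dynDist_le (hr : 0 ≤ r) (h : ∀ k < n, dist (T^[k] x) (T^[k] y) ≤ r) : dynDist T n x y ≤ r :=
  Real.iSup_le (fun k => Real.iSup_le (fun hk => h k (Finset.mem_range.1 hk)) hr) hr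

lemma dist_iterate_le_dynDist {k : ℕ} (hk : k < n) :
    dist (T^[k] x) (T^[k] y) ≤ dynDist T n x y := by
  have hbdd : BddAbove (range fun k => ⨆ _ : k ∈ Finset.range n, dist (T^[k] x) (T^[k] y)) := by
    refine ⟨∑ k ∈ Finset.range n, dist (T^[k] x) (T^[k] y), forall_mem_range.2 fun k => ?_⟩
    exact Real.iSup_le (fun hk => Finset.single_le_sum
      (f := fun k => dist (T^[k] x) (T^[k] y)) (fun _ _ => dist_nonneg) hk)
      (Finset.sum_nonneg fun _ _ => dist_nonneg)
  exact (ciSup_pos (Finset.mem_range.2 hk)).ge.trans (le_ciSup hbdd k)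

lemma dynDist_comm (x y : X) : dynDist T n x y = dynDist T n y x := by
  simp only [dynDist, dist_comm]

lemma mem_dynBall_iff (hr : 0 < r) :
    y ∈ dynBall T n x r ↔ ∀ k < n, dist (T^[k] x) (T^[k] y) < r := by
  refine ⟨fun h k hk => (dist_iterate_le_dynDist hk).trans_lt h, fun h => ?_⟩
  have hmax : ∃ r' < r, 0 ≤ r' ∧ ∀ k < n, dist (T^[k] x) (T^[k] y) ≤ r' := by
    rcases n.eq_zero_or_pos with rfl | hn
    · exact ⟨0, hr, le_rfl, by simp⟩
    · obtain ⟨k, hk, hmax⟩ := Finset.exists_max_image (Finset.range n)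
        (fun k => dist (T^[k] x) (T^[k] y)) ⟨0, Finset.mem_range.2 hn⟩
      exact ⟨_, h k (Finset.mem_range.1 hk), dist_nonneg,
        fun j hj => hmax j (Finset.mem_range.2 hj)⟩
  obtain ⟨r', hr', h0, hle⟩ := hmax
  exact (dynDist_le h0 hle).trans_lt hr'

lemma mem_dynBall_self (hr : 0 < r) : x ∈ dynBall T n x r :=
  (mem_dynBall_iff hr).2 fun k _ => by simpa using hr

lemma isOpen_dynBall (hT : Continuous T) (hr : 0 < r) : IsOpen (dynBall T n x r) := by
  have hball : dynBall T n x r = ⋂ k ∈ Finset.range n, T^[k] ⁻¹' Metric.ball (T^[k] x) r := by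
    ext y
    simp [mem_dynBall_iff hr, dist_comm]
  rw [hball]
  exact isOpen_biInter_finset fun k _ => Metric.isOpen_ball.preimage (hT.iterate k)

lemma dynCovered_biUnion_dynBall (hr : 0 < r) (F : Finset X) :
    DynCovered T (2 * r) n (⋃ x ∈ F, dynBall T n x r) F.card := by
  have hball : ∀ x ∈ F, DynCovered T (2 * r) n (dynBall T n x r) 1 := fun x _ =>
    DynCovered.of_forall_dist_le fun y hy k hk => ((mem_dynBall_iff hr).1 hy k hk).le
  simpa using DynCovered.biUnion hball

lemma exists_finset_iUnion_dynBall_eq_univ [CompactSpace X] (hT : Continuous T) (n : ℕ)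
    (hr : 0 < r) : ∃ F : Finset X, ⋃ x ∈ F, dynBall T n x r = univ := by
  obtain ⟨F, hF⟩ := isCompact_univ.elim_finite_subcover (fun x : X => dynBall T n x r)
    (fun x => isOpen_dynBall hT hr) (fun x _ => mem_iUnion.2 ⟨x, mem_dynBall_self hr⟩)
  exact ⟨F, univ_subset_iff.1 hF⟩

end BowenMetric

section SeparatedSets

variable [MetricSpace X] {T : X → X} {n : ℕ} {K : Set X} {ρ : ℝ}

lemma DynCovered.card_le {m : ℝ} (h : DynCovered T ρ n K m) (hρ : 0 ≤ ρ) {E : Finset X}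
    (hEK : ↑E ⊆ K) (hE : ∀ x ∈ E, ∀ y ∈ E, x ≠ y → ρ < dynDist T n x y) : (E.card : ℝ) ≤ m := by
  obtain ⟨𝒜, hcover, hdiam, hcard⟩ := h
  choose! S hS hxS using fun x (hx : x ∈ K) => mem_sUnion.1 (hcover hx)
  refine le_trans (Nat.cast_le.2 ?_) hcard
  refine Finset.card_le_card_of_injOn S (fun x hx => hS x (hEK hx)) fun x hx y hy hxy => ?_
  by_contra hne
  refine (hE x hx y hy hne).not_ge (dynDist_le hρ ?_)
  exact hdiam (S x) (hS x (hEK hx)) x (hxS x (hEK hx)) y (hxy ▸ hxS y (hEK hy))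

lemma DynCovered.sepNum_le {m : ℝ} (h : DynCovered T ρ n K m) (hρ : 0 ≤ ρ) :
    (sepNum T n K ρ : ℝ) ≤ m := by
  have hm : 0 ≤ m := h.elim fun _ h𝒜 => (Nat.cast_nonneg _).trans h𝒜.2.2
  refine (Nat.le_floor_iff hm).1 (csSup_le' ?_)
  rintro _ ⟨E, hEK, hE, rfl⟩
  exact Nat.le_floor (h.card_le hρ hEK hE)

lemma exists_finset_card_eq_sepNum [CompactSpace X] (T : X → X) (n : ℕ) (K : Set X) (hρ : 0 < ρ) :
    ∃ E : Finset X, E.card = sepNum T n K ρ ∧ ∀ y ∈ K, ∃ x ∈ E, dynDist T n x y ≤ ρ := by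
  classical
  obtain ⟨C, -, hC⟩ := exists_dynCovered_one_univ T hρ
  have hbdd : BddAbove {m | ∃ E : Finset X, ↑E ⊆ K ∧
      (∀ x ∈ E, ∀ y ∈ E, x ≠ y → ρ < dynDist T n x y) ∧ E.card = m} := by
    refine ⟨⌊C ^ n⌋₊, ?_⟩
    rintro _ ⟨E, -, hE, rfl⟩
    exact Nat.le_floor ((hC.univ_pow n).card_le hρ.le (subset_univ _) hE)
  obtain ⟨E, hEK, hE, hcard⟩ := Nat.sSup_mem (by exact ⟨0, ∅, by simp⟩) hbdd
  refine ⟨E, hcard, fun y hy => ?_⟩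
  by_contra! hfar
  have hyE : y ∉ E := fun hyE =>
    (hfar y hyE).not_ge (dynDist_le hρ.le fun k _ => by simpa using hρ.le)
  have hle : (insert y E).card ≤ E.card := by
    rw [hcard]
    refine le_csSup hbdd ⟨insert y E, ?_, ?_, rfl⟩
    · simpa [insert_subset_iff] using ⟨hy, hEK⟩
    · simp only [Finset.forall_mem_insert, ne_eq, not_true_eq_false, false_implies, true_and]
      exact ⟨fun x hx _ => dynDist_comm x y ▸ hfar x hx,
        fun x hx => ⟨fun _ => hfar x hx, hE x hx⟩⟩
  exact hle.not_gt (Finset.card_lt_card (Finset.ssubset_insert hyE))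

end SeparatedSets

section Rates

lemma le_exp_of_log_div_lt {m n : ℕ} {s : ℝ} (hn : n ≠ 0) (h : Real.log m / n < s) :
    (m : ℝ) ≤ Real.exp (s * n) := by
  rcases m.eq_zero_or_pos with rfl | hm
  · simpa using Real.exp_nonneg _
  · rw [← Real.log_le_iff_le_exp (by exact_mod_cast hm)]
    exact ((div_lt_iff₀ (by positivity)).1 h).le

lemma log_div_le_of_le_exp {m n : ℕ} {s : ℝ} (hs : 0 ≤ s) (h : (m : ℝ) ≤ Real.exp (s * n)) :
    Real.log m / n ≤ s := by
  refine div_le_of_le_mul₀ n.cast_nonneg hs ?_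
  rcases m.eq_zero_or_pos with rfl | hm
  · simpa using by positivity
  · exact (Real.log_le_iff_le_exp (by exact_mod_cast hm)).2 h

lemma log_natCast_div_mono {m m' : ℕ} (h : m ≤ m') (n : ℕ) :
    Real.log m / n ≤ Real.log m' / n := by
  refine div_le_div_of_nonneg_right ?_ n.cast_nonneg
  rcases m.eq_zero_or_pos with rfl | hm
  · simpa using Real.log_natCast_nonneg m'
  · exact Real.log_le_log (by exact_mod_cast hm) (by exact_mod_cast h)

end Rates

section Katok

variable [MetricSpace X] {T : X → X}

lemma ExpCovered.sepEnt_le {ρ t : ℝ} {K : Set X} (h : ExpCovered T ρ t fun _ => K) (hρ : 0 ≤ ρ)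
    (ht : 0 ≤ t) : sepEnt T K ρ ≤ t := by
  refine limsup_le_of_le (by isBoundedDefault) ?_
  filter_upwards [h] with n hn
  exact EReal.coe_le_coe_iff.2 (log_div_le_of_le_exp ht (hn.sepNum_le hρ))

variable [MeasurableSpace X] {μ : Measure X} {ε δ : ℝ}

lemma katokEntLower_nonneg : 0 ≤ katokEntLower T μ ε δ := by
  refine le_liminf_of_le (by isBoundedDefault) (Eventually.of_forall fun n => ?_)
  exact EReal.coe_nonneg.2 (div_nonneg (Real.log_natCast_nonneg _) n.cast_nonneg)

lemma katokEntLower_le_katokEnt : katokEntLower T μ ε δ ≤ katokEnt T μ ε δ :=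
  liminf_le_limsup

variable [CompactSpace X] [IsProbabilityMeasure μ]

lemma katokEnt_le_sepEnt {ε' : ℝ} (hε' : 0 < ε') (hε : ε' < ε) (hδ : δ < 1) :
    katokEnt T μ ε δ ≤ sepEnt T univ ε' := by
  refine limsup_le_limsup (Eventually.of_forall fun n => ?_)
  refine EReal.coe_le_coe_iff.2 (log_natCast_div_mono ?_ n)
  obtain ⟨E, hcard, hE⟩ := exists_finset_card_eq_sepNum T n univ hε'
  refine Nat.sInf_le ⟨E, ?_, hcard⟩
  have hcover : ⋃ x ∈ E, dynBall T n x ε = univ := eq_univ_of_forall fun y => by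
    obtain ⟨x, hx, hxy⟩ := hE y (mem_univ y)
    exact mem_biUnion hx (hxy.trans_lt hε)
  rw [hcover, measure_univ]
  exact ENNReal.ofReal_lt_one.2 hδ

lemma exists_finset_card_eq_katokNum (hT : Continuous T) (n : ℕ) (hε : 0 < ε) (hδ : δ < 1) :
    ∃ F : Finset X, ENNReal.ofReal δ < μ (⋃ x ∈ F, dynBall T n x ε) ∧
      F.card = katokNum T μ n ε δ := by
  obtain ⟨F, hF⟩ := exists_finset_iUnion_dynBall_eq_univ hT n hε
  refine Nat.sInf_mem (s := {m | ∃ F : Finset X,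
    ENNReal.ofReal δ < μ (⋃ x ∈ F, dynBall T n x ε) ∧ F.card = m}) ⟨F.card, F, ?_, rfl⟩
  rw [hF, measure_univ]
  exact ENNReal.ofReal_lt_one.2 hδ

lemma exists_expCovered_of_katokEntLower_lt {s : ℝ} (hT : Continuous T) (hε : 0 < ε) (hδ : δ < 1)
    (h : katokEntLower T μ ε δ < s) :
    ∃ P : ℕ → Set X, (∀ n, IsOpen (P n)) ∧ ExpCovered T (2 * ε) s P ∧
      ∃ᶠ n in atTop, ENNReal.ofReal δ < μ (P n) := by
  classical
  choose F hFμ hFcard using fun n => exists_finset_card_eq_katokNum (μ := μ) hT n hε hδ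
  refine ⟨fun n => if (F n).card ≤ Real.exp (s * n) then ⋃ x ∈ F n, dynBall T n x ε else ∅,
    fun n => ?_, Eventually.of_forall fun n => ?_, ?_⟩
  · dsimp only
    split_ifs
    exacts [isOpen_biUnion fun x _ => isOpen_dynBall hT hε, isOpen_empty]
  · dsimp only
    split_ifs with hcard
    · exact (dynCovered_biUnion_dynBall hε (F n)).mono subset_rfl hcard
    · exact DynCovered.empty.mono subset_rfl (Real.exp_nonneg _)
  · refine ((frequently_lt_of_liminf_lt (by isBoundedDefault) h).and_eventually
      (eventually_ne_atTop 0)).mono fun n hn => ?_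
    dsimp only
    rw [if_pos]
    · exact hFμ n
    · rw [hFcard]
      exact le_exp_of_log_div_lt hn.2 (EReal.coe_lt_coe_iff.1 hn.1)

end Katok

section InvariantMeasures

variable [MeasurableSpace X] {T : X → X} {μ : Measure X}

lemma measurable_visits (hT : Measurable T) {B : Set X} (hB : MeasurableSet B) (n : ℕ) :
    Measurable (visits T B n) := by
  change Measurable fun x => ∑ k ∈ Finset.range n, B.indicator (fun _ => 1) (T^[k] x)
  exact Finset.measurable_sum _ fun k _ => (measurable_const.indicator hB).comp (hT.iterate k)

lemma lintegral_visits (hT : MeasurePreserving T μ μ) {B : Set X} (hB : MeasurableSet B) (n : ℕ) :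
    ∫⁻ x, visits T B n x ∂μ = n * μ B := by
  have hmeas : Measurable (B.indicator fun _ => (1 : ENNReal)) := measurable_const.indicator hB
  have hmeas_iter (k : ℕ) : Measurable fun x => B.indicator (fun _ => (1 : ENNReal)) (T^[k] x) :=
    hmeas.comp (hT.iterate k).measurable
  simp_rw [natCast_visits, lintegral_finsetSum _ fun k _ => hmeas_iter k,
    (hT.iterate _).lintegral_comp hmeas, lintegral_indicator_const hB]
  simp

lemma measure_compl_rareVisits_le (hT : MeasurePreserving T μ μ) {B : Set X}
    (hB : MeasurableSet B) {η : ℝ} (hη : 0 < η) (n : ℕ) :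
    μ (rareVisits T B η n)ᶜ ≤ μ B / ENNReal.ofReal η := by
  rcases n.eq_zero_or_pos with rfl | hn
  · have : rareVisits T B η 0 = univ := eq_univ_of_forall fun x => by
      simp [mem_rareVisits, visits_eq_sum]
    simp [this]
  have hsubset : (rareVisits T B η n)ᶜ ⊆ {x | n * ENNReal.ofReal η ≤ visits T B n x} := by
    intro x hx
    rw [mem_compl_iff, mem_rareVisits, not_le] at hx
    change (n * ENNReal.ofReal η : ENNReal) ≤ visits T B n x
    rw [← ENNReal.ofReal_natCast, ← ENNReal.ofReal_mul n.cast_nonneg, ← ENNReal.ofReal_natCast]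
    exact ENNReal.ofReal_le_ofReal (mul_comm η n ▸ hx.le)
  have hmeas : Measurable fun x => (visits T B n x : ENNReal) :=
    Measurable.of_discrete.comp (measurable_visits hT.measurable hB n)
  have hn0 : (n : ENNReal) ≠ 0 := by simpa using hn.ne'
  rw [ENNReal.le_div_iff_mul_le (by simp [hη]) (by simp), mul_comm]
  refine (ENNReal.mul_le_mul_iff_right hn0 (ENNReal.natCast_ne_top n)).1 ?_
  calc n * (ENNReal.ofReal η * μ (rareVisits T B η n)ᶜ)
      ≤ n * ENNReal.ofReal η * μ {x | n * ENNReal.ofReal η ≤ visits T B n x} := by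
        rw [mul_assoc]; gcongr
    _ ≤ ∫⁻ x, visits T B n x ∂μ := mul_meas_ge_le_lintegral hmeas _
    _ = n * μ B := lintegral_visits hT hB n

lemma le_measure_limsup_of_frequently_le [IsFiniteMeasure μ] {P : ℕ → Set X} {c : ENNReal}
    (hP : ∀ n, MeasurableSet (P n)) (h : ∃ᶠ n in atTop, c ≤ μ (P n)) :
    c ≤ μ (limsup P atTop) := by
  have hanti : Antitone fun n => ⋃ i, ⋃ _ : n ≤ i, P i := fun a b hab =>
    biUnion_subset_biUnion_left fun i hi => le_trans hab hi
  rw [limsup_eq_iInf_iSup_of_nat]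
  change c ≤ μ (⋂ n, ⋃ i, ⋃ _ : n ≤ i, P i)
  rw [hanti.measure_iInter (fun n => (MeasurableSet.biUnion (to_countable _)
    fun i _ => hP i).nullMeasurableSet) ⟨0, measure_ne_top μ _⟩]
  refine le_iInf fun n => ?_
  obtain ⟨i, hi, hci⟩ := (frequently_atTop.1 h) n
  exact hci.trans (measure_mono (subset_biUnion_of_mem (u := P) hi))

lemma exists_measure_lt_of_measure_iInter_lt [IsFiniteMeasure μ] {B : ℕ → Set X} {c : ENNReal}
    (hB : ∀ n, MeasurableSet (B n)) (hanti : Antitone B) (h : μ (⋂ n, B n) < c) :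
    ∃ n, μ (B n) < c :=
  ((tendsto_measure_iInter_atTop (fun n => (hB n).nullMeasurableSet) hanti
    ⟨0, measure_ne_top μ _⟩).eventually_lt_const h).exists

lemma measure_compl_iUnion_preimage_eq_zero [IsFiniteMeasure μ] (hμ : Ergodic T μ) {R : Set X}
    (hR : MeasurableSet R) (hR0 : μ R ≠ 0) : μ (⋃ j, T^[j] ⁻¹' R)ᶜ = 0 := by
  have hmeas : MeasurableSet (⋃ j, T^[j] ⁻¹' R) :=
    .iUnion fun j => (hμ.measurable.iterate j) hR
  have hpre : T ⁻¹' (⋃ j, T^[j] ⁻¹' R) ⊆ ⋃ j, T^[j] ⁻¹' R := by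
    rw [preimage_iUnion]
    exact iUnion_subset fun j => subset_iUnion_of_subset (j + 1) subset_rfl
  rcases hμ.ae_empty_or_univ_of_preimage_ae_le hmeas.nullMeasurableSet
    hpre.eventuallyLE with h | h
  · refine absurd (measure_mono_null ?_ (ae_eq_empty.1 h)) hR0
    exact subset_iUnion_of_subset 0 subset_rfl
  · exact ae_eq_univ.1 h

/-- By ergodicity a.e. orbit reaches the set where `P` occurs infinitely often; a bounded delay `J`
then suffices up to small measure, and after this delay `P` occurs beyond every time `M`. -/
lemma exists_measure_compl_biUnion_preimage_lt [IsFiniteMeasure μ] (hμ : Ergodic T μ)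
    {P : ℕ → Set X} (hP : ∀ n, MeasurableSet (P n)) {c γ : ENNReal} (hc : c ≠ 0) (hγ : 0 < γ)
    (h : ∃ᶠ n in atTop, c ≤ μ (P n)) :
    ∃ J, ∀ M, ∃ K,
      μ (⋃ N ∈ Finset.Icc M K, ⋃ j ∈ Finset.range J, T^[j] ⁻¹' P N)ᶜ < γ := by
  have hpre : ∀ j {S : Set X}, MeasurableSet S → MeasurableSet (T^[j] ⁻¹' S) :=
    fun j _ hS => hμ.measurable.iterate j hS
  have hR : MeasurableSet (limsup P atTop) := .measurableSet_limsup hP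
  obtain ⟨J, hJ⟩ : ∃ J, μ (⋃ j ∈ Finset.range J, T^[j] ⁻¹' limsup P atTop)ᶜ < γ := by
    refine exists_measure_lt_of_measure_iInter_lt
      (fun J => (Finset.measurableSet_biUnion _ fun j _ => hpre j hR).compl)
      (fun J J' hJ => compl_subset_compl.2 (biUnion_subset_biUnion_left
        fun j hj => Finset.range_mono hJ hj)) ?_
    refine (measure_mono_null ?_ (measure_compl_iUnion_preimage_eq_zero hμ hR
      (ne_of_gt (hc.bot_lt.trans_le (le_measure_limsup_of_frequently_le hP h))))).trans_lt hγ
    intro x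
    simp only [mem_iInter, mem_compl_iff, mem_iUnion, Finset.mem_range, not_exists]
    exact fun hx j => hx (j + 1) j j.lt_succ_self
  refine ⟨J, fun M => exists_measure_lt_of_measure_iInter_lt (fun K => (Finset.measurableSet_biUnion
    _ fun N _ => Finset.measurableSet_biUnion _ fun j _ => hpre j (hP N)).compl)
    (fun K K' hK => compl_subset_compl.2 (biUnion_subset_biUnion_left
      fun N hN => Finset.Icc_subset_Icc_right hK hN)) (lt_of_le_of_lt (measure_mono ?_) hJ)⟩
  rw [← compl_iUnion]
  refine compl_subset_compl.2 (iUnion₂_subset fun j hj x hx => ?_)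
  obtain ⟨N, hMN, hxN⟩ := frequently_atTop.1 (mem_limsup_iff_frequently_mem.1 hx) M
  simp only [mem_iUnion]
  exact ⟨N, N, Finset.mem_Icc.2 ⟨hMN, le_rfl⟩, j, hj, hxN⟩

end InvariantMeasures

section EmpiricalMeasures

variable [MeasurableSpace X] {T : X → X}

/-- The uniform distribution `(1/n) ∑_{k < n} δ_{T^k x}` on an orbit segment of length `n ≠ 0`. -/
noncomputable def empiricalMeasure (T : X → X) (n : ℕ) [NeZero n] (x : X) : ProbabilityMeasure X :=
  ⟨(n : ENNReal)⁻¹ • ∑ k ∈ Finset.range n, Measure.dirac (T^[k] x), ⟨by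
    simp [Measure.finsetSum_apply,
      ENNReal.inv_mul_cancel (Nat.cast_ne_zero.2 (NeZero.ne n)) (ENNReal.natCast_ne_top n)]⟩⟩

lemma coe_empiricalMeasure (n : ℕ) [NeZero n] (x : X) : (empiricalMeasure T n x : Measure X) =
    (n : ENNReal)⁻¹ • ∑ k ∈ Finset.range n, Measure.dirac (T^[k] x) := rfl

lemma empiricalMeasure_apply {B : Set X} (hB : MeasurableSet B) (n : ℕ) [NeZero n] (x : X) :
    (empiricalMeasure T n x : Measure X) B = visits T B n x / n := by
  simp only [coe_empiricalMeasure, Measure.smul_apply, Measure.finsetSum_apply, smul_eq_mul,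
    Measure.dirac_apply' _ hB, natCast_visits, div_eq_mul_inv, mul_comm, Pi.one_def]

lemma integral_empiricalMeasure {f : X → ℝ} (hf : StronglyMeasurable f) (n : ℕ) [NeZero n]
    (x : X) : ∫ y, f y ∂empiricalMeasure T n x = birkhoffAverage ℝ T f n x := by
  rw [coe_empiricalMeasure, integral_smul_measure, integral_finsetSum_measure fun k _ =>
    (integrable_dirac' hf (by simp))]
  simp [birkhoffAverage, birkhoffSum, integral_dirac' _ _ hf]

variable [TopologicalSpace X] [HasOuterApproxClosed X] [BorelSpace X]

lemma measurePreserving_of_tendsto_empiricalMeasure (hT : Continuous T) {l : Filter ℕ} [l.NeBot]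
    (hl : l ≤ atTop) {x : ℕ → X} {ν : ProbabilityMeasure X}
    (hν : Tendsto (fun n => empiricalMeasure T (n + 1) (x n)) l (𝓝 ν)) :
    MeasurePreserving T ν ν := by
  refine ⟨hT.measurable, ?_⟩
  have := Measure.isProbabilityMeasure_map (μ := (ν : Measure X)) hT.measurable.aemeasurable
  refine ext_of_forall_integral_eq_of_IsFiniteMeasure fun f => ?_
  rw [integral_map hT.measurable.aemeasurable f.continuous.aestronglyMeasurable]
  have hlim (g : BoundedContinuousFunction X ℝ) :
      Tendsto (fun n => birkhoffAverage ℝ T g (n + 1) (x n)) l (𝓝 (∫ y, g y ∂ν)) :=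
    (ProbabilityMeasure.tendsto_iff_forall_integral_tendsto.1 hν g).congr fun n =>
      integral_empiricalMeasure g.continuous.stronglyMeasurable _ _
  have hcomp (n : ℕ) : birkhoffAverage ℝ T (f.compContinuous ⟨T, hT⟩) (n + 1) (x n)
      = birkhoffAverage ℝ T f (n + 1) (T (x n)) := by
    simp only [birkhoffAverage, birkhoffSum, BoundedContinuousFunction.compContinuous_apply,
      ContinuousMap.coe_mk, ← Function.iterate_succ_apply, Function.iterate_succ_apply']
  have hdist (n : ℕ) : dist (birkhoffAverage ℝ T f (n + 1) (x n))
      (birkhoffAverage ℝ T (f.compContinuous ⟨T, hT⟩) (n + 1) (x n)) ≤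
        2 * ‖f‖ / (n + 1 : ℕ) := by
    rw [hcomp, dist_comm, dist_birkhoffAverage_apply_birkhoffAverage]
    gcongr
    exact f.dist_le_two_norm _ _
  refine tendsto_nhds_unique (hlim (f.compContinuous ⟨T, hT⟩)) ((hlim f).congr_dist ?_)
  exact squeeze_zero (fun _ => dist_nonneg) hdist (((tendsto_const_div_atTop_nhds_zero_nat
    (2 * ‖f‖)).comp (tendsto_add_atTop_nat 1)).mono_left hl)

/-- Krylov–Bogolyubov: a limit point of the empirical measures of the orbits of `x n` charges every
closed set that these orbits visit with frequency `η`. -/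
lemma exists_measurePreserving_le_measure_iInter [T2Space X] [CompactSpace X] (hT : Continuous T)
    {B : ℕ → Set X} (hB : ∀ n, IsClosed (B n)) (hanti : Antitone B) {η : ℝ} {x : ℕ → X}
    (hx : ∀ n : ℕ, η * (n + 1 : ℕ) ≤ visits T (B n) (n + 1) (x n)) :
    ∃ ν : ProbabilityMeasure X, MeasurePreserving T ν ν ∧
      ENNReal.ofReal η ≤ (ν : Measure X) (⋂ n, B n) := by
  set e : ℕ → ProbabilityMeasure X := fun n => empiricalMeasure T (n + 1) (x n)
  obtain ⟨ν, -, hν⟩ := isCompact_univ.ultrafilter_le_nhds ((hyperfilter ℕ).map e) (by simp)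
  have hatTop : (hyperfilter ℕ : Filter ℕ) ≤ atTop := Nat.hyperfilter_le_atTop
  refine ⟨ν, measurePreserving_of_tendsto_empiricalMeasure hT hatTop hν, ?_⟩
  refine ge_of_tendsto' (tendsto_measure_iInter_atTop
    (fun n => (hB n).measurableSet.nullMeasurableSet) hanti ⟨0, measure_ne_top _ _⟩) fun K => ?_
  refine le_trans ?_ (ProbabilityMeasure.limsup_measure_closed_le_of_tendsto hν (hB K))
  refine le_limsup_of_frequently_le (Eventually.frequently ?_)
  filter_upwards [hatTop (eventually_ge_atTop K)] with n hn
  rw [empiricalMeasure_apply (hB K).measurableSet,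
    ENNReal.le_div_iff_mul_le (by simp) (by simp), ← ENNReal.ofReal_natCast,
    ← ENNReal.ofReal_natCast, ← ENNReal.ofReal_mul' (by positivity)]
  refine ENNReal.ofReal_le_ofReal ((hx n).trans ?_)
  exact_mod_cast visits_mono_set (hanti hn) _ _

end EmpiricalMeasures

lemma isExtreme_setOf_le_measure [MeasurableSpace X] {S : Set (Measure X)} {A : Set X}
    {m : ENNReal} (hm : m ≠ ⊤) (hS : ∀ μ ∈ S, μ A ≤ m) :
    IsExtreme ENNReal S {μ ∈ S | m ≤ μ A} where
  subset _ h := h.1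
  left_mem_of_mem_openSegment := by
    rintro μ₁ hμ₁ μ₂ hμ₂ μ ⟨-, hμ⟩ ⟨a, b, ha, -, hab, rfl⟩
    have ha_top : a ≠ ⊤ := ne_top_of_le_ne_top ENNReal.one_ne_top (hab ▸ le_self_add)
    have hb_top : b ≠ ⊤ := ne_top_of_le_ne_top ENNReal.one_ne_top (hab ▸ le_add_self)
    refine ⟨hμ₁, (ENNReal.mul_le_mul_iff_right ha.ne' ha_top).1 ?_⟩
    refine (ENNReal.add_le_add_iff_right (ENNReal.mul_ne_top hb_top hm)).1 ?_
    calc a * m + b * m = m := by rw [← add_mul, hab, one_mul]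
      _ ≤ a * μ₁ A + b * μ₂ A := by simpa using hμ
      _ ≤ a * μ₁ A + b * m := by gcongr; exact hS μ₂ hμ₂

section ErgodicMeasures

variable [TopologicalSpace X] [HasOuterApproxClosed X] [MeasurableSpace X] [BorelSpace X]
  {T : X → X} {A : Set X}

lemma upperSemicontinuous_measure_of_isClosed (hA : IsClosed A) :
    UpperSemicontinuous fun ν : ProbabilityMeasure X => (ν : Measure X) A :=
  upperSemicontinuous_iff_limsup_le.2 fun _ =>
    ProbabilityMeasure.limsup_measure_closed_le_of_tendsto tendsto_id hA

lemma isClosed_setOf_measurePreserving (hT : Continuous T) :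
    IsClosed {ν : ProbabilityMeasure X | MeasurePreserving T ν ν} := by
  have : {ν : ProbabilityMeasure X | MeasurePreserving T ν ν}
      = {ν | ν.map hT.measurable.aemeasurable = ν} := by
    ext ν
    exact ⟨fun h => Subtype.ext h.map_eq, fun h => ⟨hT.measurable, congrArg Subtype.val h⟩⟩
  rw [this]
  exact isClosed_eq (ProbabilityMeasure.continuous_map hT) continuous_id

/-- Krein–Milman, transported to probability measures through integration against bounded
continuous functions, because `Measure X` is not a vector space. -/
lemma extremePoints_nonempty_of_isProbabilityMeasure {S : Set (Measure X)}
    (hprob : ∀ μ ∈ S, IsProbabilityMeasure μ) (hne : S.Nonempty)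
    (hcomp : IsCompact {ν : ProbabilityMeasure X | (ν : Measure X) ∈ S}) :
    (extremePoints ENNReal S).Nonempty := by
  set I : Measure X → BoundedContinuousFunction X ℝ → ℝ := fun ν f => ∫ y, f y ∂ν
  have hI : Continuous fun ν : ProbabilityMeasure X => I ν := continuous_pi fun f =>
    ProbabilityMeasure.continuous_integral_boundedContinuousFunction f
  have himage : IsCompact (I '' S) := by
    convert hcomp.image hI using 1
    ext z
    exact ⟨fun ⟨μ, hμ, hz⟩ => ⟨⟨μ, hprob μ hμ⟩, hμ, hz⟩, fun ⟨μ, hμ, hz⟩ => ⟨μ, hμ, hz⟩⟩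
  obtain ⟨-, ⟨μ, hμ, rfl⟩, hext⟩ := himage.extremePoints_nonempty (hne.image I)
  refine ⟨μ, hμ, ?_⟩
  rintro μ₁ hμ₁ μ₂ hμ₂ ⟨a, b, ha, hb, hab, hsum⟩
  have := hprob μ hμ
  have := hprob μ₁ hμ₁
  have := hprob μ₂ hμ₂
  have ha_top : a ≠ ⊤ := ne_top_of_le_ne_top ENNReal.one_ne_top (hab ▸ le_self_add)
  have hb_top : b ≠ ⊤ := ne_top_of_le_ne_top ENNReal.one_ne_top (hab ▸ le_add_self)
  have hseg : I μ ∈ openSegment ℝ (I μ₁) (I μ₂) := by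
    refine ⟨a.toReal, b.toReal, ENNReal.toReal_pos ha.ne' ha_top, ENNReal.toReal_pos hb.ne' hb_top,
      by rw [← ENNReal.toReal_add ha_top hb_top, hab, ENNReal.toReal_one], funext fun f => ?_⟩
    simp only [I, Pi.add_apply, Pi.smul_apply]
    rw [← hsum, integral_add_measure ((f.integrable _).smul_measure ha_top)
      ((f.integrable _).smul_measure hb_top), integral_smul_measure, integral_smul_measure]
  have hI_eq : I μ₁ = I μ := hext (mem_image_of_mem I hμ₁) (mem_image_of_mem I hμ₂) hseg
  exact ext_of_forall_integral_eq_of_IsFiniteMeasure fun f => congrFun hI_eq f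

/-- The invariant measures giving maximal mass to `A` form a face of the set of invariant measures,
and an extreme point of that face is ergodic. -/
lemma exists_mem_ergodicMeasures_measure_le [T2Space X] [CompactSpace X] (hT : Continuous T)
    (hA : IsClosed A) {ν : ProbabilityMeasure X} (hν : MeasurePreserving T ν ν) :
    ∃ μ ∈ ergodicMeasures T, (ν : Measure X) A ≤ μ A := by
  have hclosed := isClosed_setOf_measurePreserving hT
  have husc := upperSemicontinuous_measure_of_isClosed hA
  obtain ⟨μ₀, hμ₀, hmax⟩ := UpperSemicontinuousOn.exists_isMaxOn ⟨ν, hν⟩ hclosed.isCompact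
    (husc.upperSemicontinuousOn _)
  let invariant : Set (Measure X) := {μ | MeasurePreserving T μ μ ∧ IsProbabilityMeasure μ}
  let face : Set (Measure X) := {μ ∈ invariant | (μ₀ : Measure X) A ≤ μ A}
  have hface : IsExtreme ENNReal invariant face :=
    isExtreme_setOf_le_measure (measure_ne_top _ _) fun μ hμ => hmax (a := ⟨μ, hμ.2⟩) hμ.1
  have hcomp : IsCompact {μ : ProbabilityMeasure X | (μ : Measure X) ∈ face} := by
    convert (hclosed.inter (husc.isClosed_preimage ((μ₀ : Measure X) A))).isCompact using 1
    ext μ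
    exact ⟨fun h => ⟨h.1.1, h.2⟩, fun h => ⟨⟨h.1, inferInstance⟩, h.2⟩⟩
  have hne : face.Nonempty := ⟨(μ₀ : Measure X), ⟨hμ₀, inferInstance⟩, le_rfl⟩
  obtain ⟨μ, hμ⟩ := extremePoints_nonempty_of_isProbabilityMeasure (fun _ hμ => hμ.1.2) hne hcomp
  have hμ_face : μ ∈ face := extremePoints_subset hμ
  exact ⟨μ, ⟨hμ_face.1.2, Ergodic.of_mem_extremePoints
    (hface.extremePoints_subset_extremePoints hμ)⟩, (hmax hν).trans hμ_face.2⟩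

lemma ergodicMeasures_nonempty [T2Space X] [CompactSpace X] [Nonempty X] (hT : Continuous T) :
    (ergodicMeasures T).Nonempty := by
  obtain ⟨ν, hν, -⟩ := exists_measurePreserving_le_measure_iInter hT (B := fun _ => univ) (η := 0)
    (x := fun _ => Classical.arbitrary X) (fun _ => isClosed_univ) antitone_const (by simp)
  obtain ⟨μ, hμ, -⟩ := exists_mem_ergodicMeasures_measure_le hT isClosed_empty hν
  exact ⟨μ, hμ⟩

end ErgodicMeasures

section ErgodicCoverings

variable [MetricSpace X] [CompactSpace X] [MeasurableSpace X] [BorelSpace X] {T : X → X} {ρ s t : ℝ}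

/-- Points that rarely leave the covered sets form again a covered set. By Markov's inequality its
measure is controlled by that of one closed set, and this control is stable in the weak topology. -/
lemma exists_expCovered_eventually_nhds_measure_compl_lt (hT : Continuous T)
    (hρ : 0 < ρ) (hs : 0 ≤ s) (hst : s < t) {μ : ProbabilityMeasure X} (hμ : Ergodic T μ)
    {P : ℕ → Set X} (hP : ∀ n, IsOpen (P n)) (hPcov : ExpCovered T ρ s P) {c β : ENNReal}
    (hc : c ≠ 0) (hβ : 0 < β) (h : ∃ᶠ n in atTop, c ≤ (μ : Measure X) (P n)) :
    ∃ V : ℕ → Set X, (∀ n, IsOpen (V n)) ∧ ExpCovered T ρ t V ∧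
      ∀ᶠ ν : ProbabilityMeasure X in 𝓝 μ, MeasurePreserving T ν ν →
        ∀ n, (ν : Measure X) (V n)ᶜ < β := by
  obtain ⟨u, hsu, hut⟩ := exists_between hst
  obtain ⟨η, hη, hrare⟩ := exists_pos_expCovered_rareVisits T hρ (hs.trans hsu.le) hut
  have hγ : 0 < β * ENNReal.ofReal η := ENNReal.mul_pos hβ.ne' (by simpa using hη)
  obtain ⟨J, hJ⟩ :=
    exists_measure_compl_biUnion_preimage_lt hμ (fun n => (hP n).measurableSet) hc hγ h
  obtain ⟨M, hM⟩ := (hrare _ (hPcov.iUnion_preimage hρ hsu J)).exists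
  obtain ⟨K, hK⟩ := hJ M
  set B : Set X := (⋃ N ∈ Finset.Icc M K, ⋃ j ∈ Finset.range J, T^[j] ⁻¹' P N)ᶜ
  have hB : IsClosed B := (isOpen_biUnion fun N _ => isOpen_biUnion fun j _ =>
    (hP N).preimage (hT.iterate j)).isClosed_compl
  refine ⟨rareVisits T B η, isOpen_rareVisits hT hB η, hM K, ?_⟩
  filter_upwards [upperSemicontinuous_measure_of_isClosed hB μ _ hK] with ν hνB hν n
  refine (measure_compl_rareVisits_le hν hB.measurableSet hη n).trans_lt ?_
  exact (ENNReal.div_lt_iff (by simp [hη]) (by simp)).2 hνB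

/-- Only countably many coverings are needed, because the space of probability measures is second
countable. -/
lemma exists_expCovered_forall_mem_ergodicMeasures (hT : Continuous T)
    (hρ : 0 < ρ) (hs : 0 ≤ s) (hst : s < t) {c β : ENNReal} (hc : c ≠ 0) (hβ : 0 < β)
    (h : ∀ μ ∈ ergodicMeasures T, ∃ P : ℕ → Set X, (∀ n, IsOpen (P n)) ∧ ExpCovered T ρ s P ∧
      ∃ᶠ n in atTop, c ≤ μ (P n)) :
    ∃ W : ℕ → Set X, (∀ n, IsOpen (W n)) ∧ ExpCovered T ρ t W ∧
      ∀ μ ∈ ergodicMeasures T, ∀ᶠ n in atTop, μ (W n)ᶜ < β := by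
  have : SecondCountableTopology (ProbabilityMeasure X) := by
    let := TopologicalSpace.pseudoMetrizableSpacePseudoMetric (ProbabilityMeasure X)
    infer_instance
  obtain ⟨u, hsu, hut⟩ := exists_between hst
  have hlocal : ∀ μ : ProbabilityMeasure X, Ergodic T (μ : Measure X) → ∃ V : ℕ → Set X,
      (∀ n, IsOpen (V n)) ∧ ExpCovered T ρ u V ∧ ∀ᶠ ν : ProbabilityMeasure X in 𝓝 μ,
        MeasurePreserving T ν ν → ∀ n, (ν : Measure X) (V n)ᶜ < β := fun μ hμ =>
    let ⟨P, hP, hPcov, hPμ⟩ := h μ ⟨inferInstance, hμ⟩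
    exists_expCovered_eventually_nhds_measure_compl_lt hT hρ hs hsu hμ hP hPcov hc hβ hPμ
  choose! V hV hVcov hVν using hlocal
  obtain ⟨D, hD_erg, hD, hcover⟩ := TopologicalSpace.countable_cover_nhdsWithin
    (s := {μ : ProbabilityMeasure X | Ergodic T μ})
    fun μ hμ => mem_nhdsWithin_of_mem_nhds (hVν μ hμ)
  rcases D.eq_empty_or_nonempty with rfl | hDne
  · refine ⟨fun _ => ∅, fun _ => isOpen_empty, .of_forall fun n => ?_, fun μ hμ => ?_⟩
    · exact DynCovered.empty.mono subset_rfl (Real.exp_nonneg _)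
    · rw [biUnion_empty] at hcover
      exact absurd (hcover (a := ⟨μ, hμ.1⟩) hμ.2) (notMem_empty _)
  obtain ⟨d, rfl⟩ := hD.exists_eq_range hDne
  have hd (i : ℕ) : Ergodic T (d i : Measure X) := hD_erg (mem_range_self i)
  obtain ⟨W, hW, hWcov, hVW⟩ := ExpCovered.exists_diagonal hut (fun i => hV _ (hd i))
    fun i => hVcov _ (hd i)
  refine ⟨W, hW, hWcov, fun μ hμ => ?_⟩
  rw [biUnion_range] at hcover
  obtain ⟨i, hi⟩ := mem_iUnion.1 (hcover (a := ⟨μ, hμ.1⟩) hμ.2)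
  filter_upwards [hVW i] with n hn
  exact (measure_mono (compl_subset_compl.2 hn)).trans_lt (hi hμ.2.toMeasurePreserving n)

lemma exists_forall_visits_le_of_forall_mem_ergodicMeasures (hT : Continuous T) {B : ℕ → Set X}
    (hB : ∀ n, IsClosed (B n)) (hanti : Antitone B) {η : ℝ}
    (h : ∀ μ ∈ ergodicMeasures T, μ (⋂ n, B n) < ENNReal.ofReal η) :
    ∃ n, ∀ x, (visits T (B n) (n + 1) x : ℝ) ≤ η * (n + 1 : ℕ) := by
  by_contra! hfreq
  choose x hx using hfreq
  obtain ⟨ν, hν, hην⟩ := exists_measurePreserving_le_measure_iInter hT hB hanti fun n => (hx n).le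
  obtain ⟨μ, hμ, hνμ⟩ := exists_mem_ergodicMeasures_measure_le hT (isClosed_iInter hB) hν
  exact (hην.trans hνμ).not_gt (h μ hμ)

/-- Every orbit rarely leaves the sets `W N`: otherwise a limit of empirical measures, and hence an
ergodic measure, would charge the complement of all of them. -/
lemma expCovered_univ_of_forall_mem_ergodicMeasures (hT : Continuous T) (hρ : 0 < ρ) (hs : 0 ≤ s)
    (hst : s < t) {c : ENNReal} (hc : c ≠ 0)
    (h : ∀ μ ∈ ergodicMeasures T, ∃ P : ℕ → Set X, (∀ n, IsOpen (P n)) ∧ ExpCovered T ρ s P ∧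
      ∃ᶠ n in atTop, c ≤ μ (P n)) :
    ExpCovered T ρ t fun _ => univ := by
  obtain ⟨u, hsu, hut⟩ := exists_between hst
  obtain ⟨η, hη, hrare⟩ := exists_pos_expCovered_rareVisits T hρ (hs.trans hsu.le) hut
  obtain ⟨W, hW, hWcov, hWμ⟩ := exists_expCovered_forall_mem_ergodicMeasures hT hρ hs hsu hc
    (ENNReal.ofReal_pos.2 (half_pos hη)) h
  obtain ⟨M, hM⟩ := (hrare W hWcov).exists
  set B : ℕ → Set X := fun K => (⋃ N ∈ Finset.Icc M K, W N)ᶜ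
  have hB (K : ℕ) : IsClosed (B K) := (isOpen_biUnion fun N _ => hW N).isClosed_compl
  have hanti : Antitone B := fun K K' hK => compl_subset_compl.2
    (biUnion_subset_biUnion_left fun N hN => Finset.Icc_subset_Icc_right hK hN)
  have hBμ : ∀ μ ∈ ergodicMeasures T, μ (⋂ K, B K) < ENNReal.ofReal (η / 2) := by
    intro μ hμ
    obtain ⟨N, hMN, hN⟩ := ((hWμ μ hμ).and (eventually_ge_atTop M)).exists.imp fun _ => And.symm
    refine (measure_mono ((iInter_subset B N).trans (compl_subset_compl.2 ?_))).trans_lt hN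
    exact subset_biUnion_of_mem (u := W) (Finset.mem_Icc.2 ⟨hMN, le_rfl⟩)
  obtain ⟨K, hK⟩ := exists_forall_visits_le_of_forall_mem_ergodicMeasures hT hB hanti hBμ
  filter_upwards [hM K, eventually_rareVisits_eq_univ (half_lt_self hη) K.succ_ne_zero hK]
    with n hn huniv
  exact huniv ▸ hn

end ErgodicCoverings

section VariationalPrinciple

lemma limsup_div_log_le_of_forall_le_comp_mul {f g : ℝ → EReal} {c : ℝ} (hc : 0 < c)
    (h : ∀ ε > 0, f ε ≤ g (c * ε)) :
    limsup (fun ε => f ε / (Real.log (1 / ε) : ℝ)) (𝓝[>] 0) ≤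
      limsup (fun ε => g ε / (Real.log (1 / ε) : ℝ)) (𝓝[>] 0) := by
  have hpos : ∀ᶠ ε : ℝ in 𝓝[>] 0, 0 < ε := self_mem_nhdsWithin
  have hlog : Tendsto (fun ε : ℝ => Real.log (1 / ε)) (𝓝[>] 0) atTop := by
    simp only [one_div]
    exact Real.tendsto_log_atTop.comp tendsto_inv_nhdsGT_zero
  have hscale : Tendsto (fun ε : ℝ => c * ε) (𝓝[>] 0) (𝓝[>] 0) := by
    refine tendsto_nhdsWithin_iff.2 ⟨?_, hpos.mono fun ε hε => mul_pos hc hε⟩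
    simpa using (tendsto_id.const_mul c).mono_left (nhdsWithin_le_nhds (a := (0 : ℝ)))
  refine EReal.le_of_forall_lt_iff_le.1 fun b hb => ?_
  obtain ⟨b₀, hb₀, hb₀b⟩ := EReal.lt_iff_exists_real_btwn.1 hb
  have hg : ∀ᶠ ε : ℝ in 𝓝[>] 0, g ε ≤ (b₀ * Real.log (1 / ε) : ℝ) := by
    filter_upwards [eventually_lt_of_limsup_lt hb₀, hlog.eventually_gt_atTop 0] with ε hε hl
    rw [EReal.coe_mul]
    exact ((EReal.div_lt_iff (EReal.coe_pos.2 hl) (EReal.coe_ne_top _)).1 hε).le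
  refine limsup_le_of_le (by isBoundedDefault) ?_
  filter_upwards [hscale.eventually hg, hpos, hlog.eventually_gt_atTop 0,
    hlog.eventually_ge_atTop (b₀ * Real.log (1 / c) / (b - b₀))] with ε hgε hε hl hlarge
  rw [EReal.div_le_iff_le_mul (EReal.coe_pos.2 hl) (EReal.coe_ne_top _), ← EReal.coe_mul]
  refine (h ε hε).trans (hgε.trans (EReal.coe_le_coe_iff.2 ?_))
  have hlog_mul : Real.log (1 / (c * ε)) = Real.log (1 / c) + Real.log (1 / ε) := by
    rw [← Real.log_mul (by positivity) (by positivity), one_div_mul_one_div]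
  rw [div_le_iff₀ (sub_pos.2 (EReal.coe_lt_coe_iff.1 hb₀b))] at hlarge
  rw [hlog_mul]
  linarith

variable [MetricSpace X] [CompactSpace X] [Nonempty X] [MeasurableSpace X] [BorelSpace X]
  {T : X → X} {ε δ : ℝ}

lemma iSup_katokEntLower_nonneg (hT : Continuous T) :
    0 ≤ ⨆ μ ∈ ergodicMeasures T, katokEntLower T μ ε δ :=
  let ⟨μ, hμ⟩ := ergodicMeasures_nonempty hT
  le_iSup₂_of_le μ hμ katokEntLower_nonneg

lemma sepEnt_le_iSup_katokEntLower (hT : Continuous T) (hε : 0 < ε) (hδ : δ ∈ Ioo 0 1) :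
    sepEnt T univ (2 * ε) ≤ ⨆ μ ∈ ergodicMeasures T, katokEntLower T μ ε δ := by
  refine EReal.le_of_forall_lt_iff_le.1 fun t ht => ?_
  obtain ⟨s, hs, hst⟩ := EReal.lt_iff_exists_real_btwn.1 ht
  have hs0 : 0 ≤ s := EReal.coe_nonneg.1 ((iSup_katokEntLower_nonneg hT).trans hs.le)
  have hst : s < t := EReal.coe_lt_coe_iff.1 hst
  have hρ : 0 < 2 * ε := by positivity
  refine ExpCovered.sepEnt_le ?_ hρ.le (hs0.trans hst.le)
  refine expCovered_univ_of_forall_mem_ergodicMeasures hT hρ hs0 hst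
    (ENNReal.ofReal_pos.2 hδ.1).ne' fun μ hμ => ?_
  have := hμ.1
  obtain ⟨P, hP, hPcov, hPμ⟩ := exists_expCovered_of_katokEntLower_lt hT hε hδ.2
    ((le_iSup₂ (f := fun μ _ => katokEntLower T μ ε δ) μ hμ).trans_lt hs)
  exact ⟨P, hP, hPcov, hPμ.mono fun _ => le_of_lt⟩

theorem upper_mdim_eq_limsup_katok_general (hT : Continuous T) (hδ : δ ∈ Ioo 0 1) :
    mdimUpper T = limsup (fun ε : ℝ =>
      (⨆ μ ∈ ergodicMeasures T, katokEnt T μ ε δ)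
        / ((Real.log (1 / ε) : ℝ) : EReal)) (𝓝[>] (0:ℝ)) := by
  refine le_antisymm (limsup_div_log_le_of_forall_le_comp_mul one_half_pos fun ε hε => ?_)
    (limsup_div_log_le_of_forall_le_comp_mul one_half_pos fun ε hε => ?_)
  · calc sepEnt T univ ε = sepEnt T univ (2 * (1 / 2 * ε)) := by ring_nf
      _ ≤ ⨆ μ ∈ ergodicMeasures T, katokEntLower T μ (1 / 2 * ε) δ :=
        sepEnt_le_iSup_katokEntLower hT (by positivity) hδ
      _ ≤ ⨆ μ ∈ ergodicMeasures T, katokEnt T μ (1 / 2 * ε) δ :=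
        iSup₂_mono fun μ _ => katokEntLower_le_katokEnt
  · refine iSup₂_le fun μ hμ => ?_
    have := hμ.1
    exact katokEnt_le_sepEnt (by positivity) (by linarith) hδ.2

end VariationalPrinciple

section Theorems

variable [MetricSpace X] [CompactSpace X] [Nonempty X] [MeasurableSpace X] [BorelSpace X]

/-- Variational principle for the upper metric mean dimension in terms of Katok's
entropy (Theorem 4.2, first part). -/
theorem upper_mdim_eq_limsup_katok (T : X → X) (hT : IsHomeomorph T)
    (δ : ℝ) (hδ : δ ∈ Set.Ioo (0:ℝ) 1) :
    mdimUpper T = limsup (fun ε : ℝ =>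
      (⨆ μ ∈ ergodicMeasures T, katokEnt T μ ε δ)
        / ((Real.log (1 / ε) : ℝ) : EReal)) (𝓝[>] (0:ℝ)) :=
  upper_mdim_eq_limsup_katok_general hT.continuous hδ

end Theorems
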